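/- arXiv:2405.03018 — 2 statements merged into one kernel-verified Lean document; each statement's English description precedes it below -/
import Mathlib

section
/- For every n ≥ 2, every cost matrix c : Fin n → Fin n → ℝ≥0∞, every subset S of Fin n containing 0, and every k ∈ S, the Held–Karp value hk S k equals the infimum, taken over all injective maps p : Fin S.card → Fin n whose range is exactly S and which satisfy p 0 = 0 and p (S.card - 1) = k, of the total cost ∑_{i=0}^{S.card - 2} c (p i) (p (i+1)). (When no such map exists the infimum is ∞, matching hk.) -/
/-!
The recursion is unrolled one last step at a time. A path through all of `S` ending at `k ≠ 0`
is a path through all of `S \ {k}` ending at some `j`, followed by the step `j → k`: dropping the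
last vertex gives `hk_le_pathCost` (the table is at most the cost of every path), and appending `k`
gives `exists_pathCost_lt` (some path costs less than any bound exceeding the table entry). Both
are inductions on `S.card - 1`. For `k = 0` and `2 ≤ S.card` both sides are `∞`: no injective path
starts and ends at `0`. To keep the vertex set and the index type independent of each
other, paths are represented by sequences `ℕ → Fin n` of which only an initial segment matters.
-/

open scoped ENNReal

/-- The Held–Karp dynamic-programming table: `hk c S k` is `0` when `S = {0}` and `k = 0`,
`⨅ j ∈ S \ {k}, (hk c (S.erase k) j + c j k)` when `0 ∈ S`, `k ∈ S`, `k ≠ 0` and `2 ≤ S.card`,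
and `∞` otherwise. -/
noncomputable def hk {n : ℕ} [NeZero n] (c : Fin n → Fin n → ℝ≥0∞) :
    Finset (Fin n) → Fin n → ℝ≥0∞
  | S, k =>
    if S = {0} ∧ k = 0 then 0
    else if h : 0 ∈ S ∧ k ∈ S ∧ k ≠ 0 ∧ 2 ≤ S.card then
      ⨅ j ∈ S \ {k}, (hk c (S.erase k) j + c j k)
    else ⊤
  termination_by S _ => S.card
  decreasing_by exact Finset.card_erase_lt_of_mem h.2.1

/-- The first `m + 1` terms of `q` visit exactly the vertices in `S`, from `0` to `k`. Repetitions
are not excluded here: they are when `S.card = m + 1`, see `IsPath.injOn`. -/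
def IsPath {n : ℕ} [NeZero n] (m : ℕ) (S : Finset (Fin n)) (k : Fin n) (q : ℕ → Fin n) : Prop :=
  (Finset.range (m + 1)).image q = S ∧ q 0 = 0 ∧ q m = k

/-- The total cost of the first `m` steps of `q`. -/
noncomputable def pathCost {n : ℕ} (c : Fin n → Fin n → ℝ≥0∞) (m : ℕ) (q : ℕ → Fin n) : ℝ≥0∞ :=
  ∑ i ∈ Finset.range m, c (q i) (q (i + 1))

theorem IsPath.injOn {n : ℕ} [NeZero n] {m : ℕ} {S : Finset (Fin n)} {k : Fin n} {q : ℕ → Fin n}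
    (h : IsPath m S k q) (hS : S.card = m + 1) :
    Set.InjOn q (Finset.range (m + 1) : Set ℕ) := by
  rw [← Finset.card_image_iff, h.1, hS, Finset.card_range]

theorem hk_singleton {n : ℕ} [NeZero n] (c : Fin n → Fin n → ℝ≥0∞) :
    hk c {0} 0 = 0 := by
  rw [hk]; simp

theorem hk_step {n : ℕ} [NeZero n] (c : Fin n → Fin n → ℝ≥0∞) {S : Finset (Fin n)} {k : Fin n}
    (h0 : 0 ∈ S) (hk' : k ∈ S) (hk0 : k ≠ 0) (hS : 2 ≤ S.card) :
    hk c S k = ⨅ j ∈ S \ {k}, (hk c (S.erase k) j + c j k) := by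
  rw [hk, if_neg (fun h => hk0 h.2), dif_pos ⟨h0, hk', hk0, hS⟩]

theorem hk_zero_eq_top {n : ℕ} [NeZero n] (c : Fin n → Fin n → ℝ≥0∞) {S : Finset (Fin n)}
    (hS : 2 ≤ S.card) : hk c S 0 = ⊤ := by
  rw [hk, if_neg, dif_neg]
  · simp
  · rintro ⟨rfl, -⟩
    simp at hS

theorem hk_le_pathCost {n : ℕ} [NeZero n] (c : Fin n → Fin n → ℝ≥0∞) (m : ℕ) :
    ∀ (S : Finset (Fin n)) (k : Fin n) (q : ℕ → Fin n), S.card = m + 1 → IsPath m S k q →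
      hk c S k ≤ pathCost c m q := by
  induction m with
  | zero =>
    rintro S k q - ⟨h1, h2, h3⟩
    obtain rfl : k = 0 := h3.symm.trans h2
    obtain rfl : S = {0} := by rw [← h1]; simp [h2]
    simp [hk_singleton]
  | succ m ih =>
    intro S k q hS hq
    have inj := hq.injOn hS
    obtain ⟨h1, h2, h3⟩ := hq
    have hmem : ∀ i, i < m + 2 → q i ∈ S := fun i hi => by
      rw [← h1]; exact Finset.mem_image_of_mem q (Finset.mem_range.2 hi)
    have hne : ∀ i, i < m + 1 → q i ≠ k := fun i hi he => by
      have := inj (by simp; omega) (by simp) (he.trans h3.symm)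
      omega
    have hkS : k ∈ S := h3 ▸ hmem (m + 1) (by omega)
    have herase : (Finset.range (m + 1)).image q = S.erase k := by
      rw [← h1, Finset.range_add_one (n := m + 1), Finset.image_insert, h3, Finset.erase_insert]
      simpa using hne
    rw [hk_step c (h2 ▸ hmem 0 (by omega)) hkS (fun h => hne 0 (by omega) (h2.trans h.symm))
      (by omega), pathCost, Finset.sum_range_succ, h3]
    refine (iInf₂_le (q m) ?_).trans (add_le_add_left (ih _ _ q ?_ ⟨herase, h2, rfl⟩) _)
    · simpa using ⟨hmem m (by omega), hne m (by omega)⟩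
    · rw [Finset.card_erase_of_mem hkS, hS]; rfl

theorem exists_pathCost_lt {n : ℕ} [NeZero n] (c : Fin n → Fin n → ℝ≥0∞) (m : ℕ) :
    ∀ (S : Finset (Fin n)) (k : Fin n) (b : ℝ≥0∞), S.card = m + 1 → 0 ∈ S → k ∈ S →
      hk c S k < b → ∃ q, IsPath m S k q ∧ pathCost c m q < b := by
  induction m with
  | zero =>
    intro S k b hS h0 hkS hb
    obtain ⟨a, rfl⟩ := Finset.card_eq_one.1 hS
    obtain rfl := Finset.mem_singleton.1 h0
    obtain rfl := Finset.mem_singleton.1 hkS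
    refine ⟨fun _ => 0, ⟨by simp, rfl, rfl⟩, ?_⟩
    simpa [pathCost, hk_singleton] using hb
  | succ m ih =>
    intro S k b hS h0 hkS hb
    have hk0 : k ≠ 0 := by
      rintro rfl
      rw [hk_zero_eq_top c (by omega)] at hb
      exact not_top_lt hb
    rw [hk_step c h0 hkS hk0 (by omega)] at hb
    simp only [iInf_lt_iff] at hb
    obtain ⟨j, hj, hb⟩ := hb
    -- Move the last step to the other side, so that the bound passes to the shorter path.
    obtain ⟨q, ⟨h1, h2, h3⟩, hq⟩ := ih (S.erase k) j (b - c j k)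
      (by rw [Finset.card_erase_of_mem hkS, hS]; rfl) (Finset.mem_erase.2 ⟨hk0.symm, h0⟩)
      (by simpa [and_comm] using hj) (lt_tsub_iff_right.2 hb)
    have hupd : ∀ i, i < m + 1 → Function.update q (m + 1) k i = q i := fun i hi =>
      Function.update_of_ne (by omega) _ _
    refine ⟨Function.update q (m + 1) k, ⟨?_, ?_, Function.update_self ..⟩, ?_⟩
    · rw [Finset.range_add_one (n := m + 1), Finset.image_insert, Function.update_self,
        Finset.image_congr (g := q) (fun i hi => hupd i (by simpa using hi)), h1,
        Finset.insert_erase hkS]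
    · rw [hupd 0 (by omega), h2]
    · rw [pathCost, Finset.sum_range_succ, Function.update_self, hupd m (by omega), h3]
      refine lt_of_eq_of_lt ?_ (lt_tsub_iff_right.1 hq)
      congr 1
      refine Finset.sum_congr rfl fun i hi => ?_
      have := Finset.mem_range.1 hi
      rw [hupd i (by omega), hupd (i + 1) (by omega)]

/-- For `0 ∈ S` and `k ∈ S`, the Held–Karp value `hk c S k` is the infimum, over all injective
maps `p : Fin S.card → Fin n` with range exactly `S`, starting at `0` and ending at `k`, of the
total path cost `∑_{i=0}^{S.card-2} c (p i) (p (i+1))`. -/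
theorem heldKarp_eq_inf_paths {n : ℕ} [NeZero n] (hn : 2 ≤ n)
    (c : Fin n → Fin n → ℝ≥0∞) (S : Finset (Fin n)) (hS : (0 : Fin n) ∈ S)
    (k : Fin n) (hkS : k ∈ S) :
    hk c S k =
      ⨅ (p : Fin S.card → Fin n)
        (_ : Function.Injective p ∧ Set.range p = (S : Set (Fin n)) ∧
          p ⟨0, Finset.card_pos.mpr ⟨0, hS⟩⟩ = 0 ∧
          p ⟨S.card - 1, Nat.sub_lt (Finset.card_pos.mpr ⟨0, hS⟩) one_pos⟩ = k),
        ∑ i : Fin (S.card - 1),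
          c (p ⟨i.1, lt_of_lt_of_le i.isLt (Nat.sub_le _ _)⟩)
            (p ⟨i.1 + 1, Nat.add_lt_of_lt_sub i.isLt⟩) := by
  have hpos : 0 < S.card := Finset.card_pos.mpr ⟨0, hS⟩
  have hcard : S.card = S.card - 1 + 1 := by omega
  apply le_antisymm
  · refine le_iInf₂ fun p ⟨_, hran, hp0, hpk⟩ => ?_
    -- Extend `p` to a sequence; the values beyond `S.card` are irrelevant.
    let q : ℕ → Fin n := fun i => if h : i < S.card then p ⟨i, h⟩ else 0
    have hq : ∀ i (h : i < S.card), q i = p ⟨i, h⟩ := fun i h => dif_pos h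
    refine (hk_le_pathCost c (S.card - 1) S k q hcard ⟨?_, ?_, ?_⟩).trans_eq ?_
    · rw [← hcard]
      ext x
      rw [← Finset.mem_coe (s := S), ← hran]
      simp only [Finset.mem_image, Finset.mem_range, Set.mem_range]
      constructor
      · rintro ⟨i, hi, rfl⟩
        exact ⟨⟨i, hi⟩, (hq i hi).symm⟩
      · rintro ⟨i, rfl⟩
        exact ⟨i, i.2, hq i i.2⟩
    · rw [hq 0 hpos, hp0]
    · rw [hq _ (by omega), hpk]
    · rw [pathCost, Finset.sum_range]
      refine Finset.sum_congr rfl fun i _ => ?_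
      rw [hq i (by omega), hq (i + 1) (by omega)]
  · refine le_of_forall_gt fun b hb => ?_
    obtain ⟨q, hq, hlt⟩ := exists_pathCost_lt c (S.card - 1) S k b hcard hS hkS hb
    have inj := hq.injOn hcard
    obtain ⟨h1, h2, h3⟩ := hq
    rw [← hcard] at h1 inj
    refine lt_of_le_of_lt (iInf₂_le (fun i : Fin S.card => q i) ⟨?_, ?_, h2, h3⟩) ?_
    · rwa [pathCost, Finset.sum_range] at hlt
    · intro i j hij
      exact Fin.ext (inj (by simp) (by simp) hij)
    · ext x
      have hx := congrArg (x ∈ ·) h1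
      simp only [Finset.mem_image, Finset.mem_range] at hx
      rw [Finset.mem_coe, ← hx]
      simp [Fin.exists_iff]
end

section
/- For every n ≥ 2, every cost matrix c : Fin n → Fin n → ℝ≥0∞, and every ℓ with 2 ≤ ℓ ≤ n, the ℓ-th layer of the Held–Karp table is obtained from a tropical (min-plus) matrix product of the (ℓ−1)-th layer with the cost matrix: letting A be the matrix over the tropical semiring Tropical ℝ≥0∞ with rows indexed by the subsets S of Fin n of cardinality ℓ−1 containing 0 and columns indexed by Fin n, whose entries are A S j = trop (hk S j), and letting C be the tropical matrix with C j k = trop (c j k), one has, for every T ⊆ Fin n with T.card = ℓ, 0 ∈ T, and every k ∈ T with k ≠ 0: hk T k = untrop ((A * C) (T.erase k) k), where * is matrix multiplication over the tropical semiring. -/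
/-!
An entry of the tropical product `A * C` is the minimum over all `j : Fin n` of
`hk c (T.erase k) j + c j k`, whereas the Held–Karp recursion only minimizes over `j ∈ T \ {k}`.
The two agree because `hk c S j = ⊤` whenever `j ∉ S` (`hk_eq_top_of_notMem`), so the extra terms
do not affect the minimum.
-/

open scoped ENNReal

theorem hk_eq_top_of_notMem {n : ℕ} [NeZero n] (c : Fin n → Fin n → ℝ≥0∞)
    {S : Finset (Fin n)} {j : Fin n} (hj : j ∉ S) : hk c S j = ⊤ := by
  have h₁ : ¬(S = {0} ∧ j = 0) := by
    rintro ⟨rfl, rfl⟩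
    simp at hj
  rw [hk, if_neg h₁, dif_neg fun h => hj h.2.1]

/-- The `ℓ`-th layer of the Held–Karp table arises as a tropical (min-plus) matrix product of
the `(ℓ-1)`-th layer with the cost matrix: if `A` is the tropical matrix whose rows are
indexed by the subsets of `Fin n` of cardinality `ℓ - 1` containing `0`, with
`A S j = trop (hk c S j)`, and `C j k = trop (c j k)`, then for every `T` of cardinality `ℓ`
with `0 ∈ T` and every `k ∈ T` with `k ≠ 0`, we have
`hk c T k = untrop ((A * C) (T.erase k) k)`. -/
theorem heldKarp_layer_eq_tropical_matmul {n : ℕ} [NeZero n] (hn : 2 ≤ n)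
    (c : Fin n → Fin n → ℝ≥0∞) (ℓ : ℕ) (hℓ2 : 2 ≤ ℓ) (hℓn : ℓ ≤ n)
    (A : Matrix {S : Finset (Fin n) // S.card = ℓ - 1 ∧ (0 : Fin n) ∈ S} (Fin n)
      (Tropical ℝ≥0∞))
    (hA : ∀ S j, A S j = Tropical.trop (hk c S.1 j))
    (C : Matrix (Fin n) (Fin n) (Tropical ℝ≥0∞))
    (hC : ∀ j k, C j k = Tropical.trop (c j k))
    (T : Finset (Fin n)) (hT : T.card = ℓ) (hT0 : (0 : Fin n) ∈ T)
    (k : Fin n) (hkT : k ∈ T) (hk0 : k ≠ 0) :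
    hk c T k =
      Tropical.untrop
        ((A * C)
          ⟨T.erase k,
            by rw [Finset.card_erase_of_mem hkT, hT],
            Finset.mem_erase.mpr ⟨Ne.symm hk0, hT0⟩⟩ k) := by
  have h₁ : ¬(T = {0} ∧ k = 0) := fun h => hk0 h.2
  rw [hk, if_neg h₁, dif_pos ⟨hT0, hkT, hk0, hT ▸ hℓ2⟩, Matrix.mul_apply, Finset.untrop_sum',
    Finset.inf_univ_eq_iInf]
  refine iInf_congr fun j => ?_
  simp only [Function.comp_apply, hA, hC, Tropical.untrop_mul, Tropical.untrop_trop,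
    Finset.sdiff_singleton_eq_erase]
  by_cases hj : j ∈ T.erase k
  · simp only [hj, iInf_pos]
  · simp only [hj, iInf_false, hk_eq_top_of_notMem c hj, top_add]
end
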